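/- The real Gamma function satisfies Γ(11/60) = (√π · √φ · √(√15 − ψ) · √(√10 − √φ) / (2^(5/4) · √3 · 5^(17/24))) · Γ(1/3)⁻¹ · Γ(1/60), where φ = 5 + √5 and ψ = √(5 + 2√5). -/

import Mathlib

open Real

lemma aux_convex (n : ℕ) (hn : 0 < n) (j : ℕ) :
    ConvexOn ℝ (Set.Ioi (0:ℝ)) (fun s : ℝ => Real.log (Real.Gamma ((s + j) / n))) := by
  have hn' : (0:ℝ) < n := by exact_mod_cast hn
  have hj : (0:ℝ) ≤ j := by positivity
  have h := Real.convexOn_log_Gamma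
  refine ⟨convex_Ioi _, ?_⟩
  intro x hx y hy a b ha hb hab
  have hx' : (0:ℝ) < x := hx
  have hy' : (0:ℝ) < y := hy
  have := h.2 (show (x + j) / n ∈ Set.Ioi (0:ℝ) from by simp only [Set.mem_Ioi]; positivity)
    (show (y + j) / n ∈ Set.Ioi (0:ℝ) from by simp only [Set.mem_Ioi]; positivity) ha hb hab
  simp only [Function.comp_apply, smul_eq_mul] at this ⊢
  convert this using 3
  field_simp
  linear_combination (-(j:ℝ)) * hab

lemma aux_mul (n : ℕ) (hn : 0 < n) {s : ℝ} (hs : 0 < s) :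
    (∏ j ∈ Finset.range n, Real.Gamma ((s + j) / n)) * (n:ℝ) ^ (s - 1) /
      (∏ j ∈ Finset.range n, Real.Gamma ((1 + j) / n)) = Real.Gamma s := by
  have hn' : (0:ℝ) < n := by exact_mod_cast hn
  have hpos : ∀ y : ℝ, 0 < y → 0 < ∏ j ∈ Finset.range n, Real.Gamma ((y + j) / n) := by
    intro y hy
    exact Finset.prod_pos fun j _ => Real.Gamma_pos_of_pos (by positivity)
  have hc := hpos 1 one_pos
  refine Real.eq_Gamma_of_log_convex (f := fun s : ℝ =>
    (∏ j ∈ Finset.range n, Real.Gamma ((s + j) / n)) * (n:ℝ) ^ (s - 1) /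
      (∏ j ∈ Finset.range n, Real.Gamma ((1 + j) / n))) ?_ ?_ ?_ ?_ hs
  · have h1 : ConvexOn ℝ (Set.Ioi (0:ℝ))
        (fun s : ℝ => ∑ j ∈ Finset.range n, Real.log (Real.Gamma ((s + j) / n))) := by
      have : ∀ m : ℕ, ConvexOn ℝ (Set.Ioi (0:ℝ))
        (fun s : ℝ => ∑ j ∈ Finset.range m, Real.log (Real.Gamma ((s + j) / n))) := by
        intro m
        induction m with
        | zero => simpa using convexOn_const (0:ℝ) (convex_Ioi (0:ℝ))
        | succ m ih =>
          simp only [Finset.sum_range_succ]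
          exact ih.add (aux_convex n hn m)
      exact this n
    have h2 : ConvexOn ℝ (Set.Ioi (0:ℝ)) (fun s : ℝ => (s - 1) * Real.log n -
        Real.log (∏ j ∈ Finset.range n, Real.Gamma ((1 + j) / n))) := by
      refine ⟨convex_Ioi _, ?_⟩
      intro x _ y _ a b _ _ hab
      simp only [smul_eq_mul]
      apply le_of_eq
      obtain rfl : b = 1 - a := by linarith
      ring
    refine (h1.add h2).congr ?_
    intro x hx
    have hx' : (0:ℝ) < x := hx
    have hp := hpos x hx'
    simp only [Function.comp_apply, Pi.add_apply]
    rw [Real.log_div (by positivity) hc.ne', Real.log_mul hp.ne' (by positivity),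
      Real.log_rpow hn', Real.log_prod (s := Finset.range n)
        (f := fun j : ℕ => Real.Gamma ((x + j) / n))
        (fun j _ => (Real.Gamma_pos_of_pos (by positivity)).ne')]
    ring
  · intro y hy
    obtain ⟨m, rfl⟩ : ∃ m, n = m + 1 := ⟨n - 1, by omega⟩
    have e : ∏ j ∈ Finset.range (m+1), Real.Gamma ((y + 1 + j) / ((m+1 : ℕ):ℝ)) =
        (y / ((m+1 : ℕ):ℝ)) * ∏ j ∈ Finset.range (m+1), Real.Gamma ((y + j) / ((m+1 : ℕ):ℝ)) := by
      rw [Finset.prod_range_succ, Finset.prod_range_succ']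
      have : (y + 1 + (m:ℝ)) / ((m+1 : ℕ):ℝ) = y / ((m+1 : ℕ):ℝ) + 1 := by
        push_cast at hn' ⊢
        field_simp
        ring
      rw [this, Real.Gamma_add_one (by positivity)]
      have e2 : ∀ j ∈ Finset.range m, Real.Gamma ((y + 1 + j) / ((m+1 : ℕ):ℝ)) =
          Real.Gamma ((y + ((j+1 : ℕ):ℝ)) / ((m+1 : ℕ):ℝ)) := by
        intro j _
        push_cast
        congr 2
        ring
      rw [Finset.prod_congr rfl e2]
      simp only [Nat.cast_zero, add_zero]
      ring
    rw [e, show y + 1 - 1 = (y - 1) + 1 by ring, Real.rpow_add hn', Real.rpow_one]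
    field_simp
  · intro y hy
    have := hpos y hy
    positivity
  · simp [hc.ne']

lemma aux_ab : Real.cos (π/5) = (1 + √5)/4 := Real.cos_pi_div_five

lemma mul3 {x : ℝ} (hx : 0 < x) :
    log (Gamma x) + log (Gamma (x + 1/3)) + log (Gamma (x + 2/3)) =
      log (2 * π) + (1/2 - 3 * x) * log 3 + log (Gamma (3 * x)) := by
  have h := aux_mul 3 (by norm_num) (s := 3 * x) (by positivity)
  simp only [Finset.prod_range_succ, Finset.prod_range_zero] at h
  push_cast at h
  rw [show (3 * x + 0)/3 = x by ring, show (3 * x + 1)/3 = x + 1/3 by ring,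
    show (3 * x + 2)/3 = x + 2/3 by ring, show ((1:ℝ)+0)/3 = 1/3 by norm_num,
    show ((1:ℝ)+1)/3 = 1 - 1/3 by norm_num, show ((1:ℝ)+2)/3 = 1 by norm_num, Gamma_one,
    one_mul, one_mul, mul_one, Gamma_mul_Gamma_one_sub, show π * (1/3) = π/3 by ring,
    sin_pi_div_three] at h
  have p1 := Gamma_pos_of_pos hx
  have p2 := Gamma_pos_of_pos (show 0 < x + 1/3 by positivity)
  have p3 := Gamma_pos_of_pos (show 0 < x + 2/3 by positivity)
  have p4 := Real.pi_pos
  rw [← h, log_div (by positivity) (by positivity), log_mul (by positivity) (by positivity),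
    log_mul (by positivity) (by positivity), log_mul (by positivity) (by positivity),
    log_rpow (by norm_num), log_div (by positivity) (by positivity),
    log_div (by positivity) (by positivity), log_sqrt (by positivity),
    log_mul (by positivity) (by positivity)]
  ring

lemma mul5 {x : ℝ} (hx : 0 < x) :
    log (Gamma x) + log (Gamma (x + 1/5)) + log (Gamma (x + 2/5)) + log (Gamma (x + 3/5))
      + log (Gamma (x + 4/5)) =
      2 * log (2 * π) + (1/2 - 5 * x) * log 5 + log (Gamma (5 * x)) := by
  have h := aux_mul 5 (by norm_num) (s := 5 * x) (by positivity)
  simp only [Finset.prod_range_succ, Finset.prod_range_zero] at h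
  push_cast at h
  have r1 := Real.Gamma_mul_Gamma_one_sub (1/5)
  have r2 := Real.Gamma_mul_Gamma_one_sub (2/5)
  have hs : sin (π * (1/5)) * sin (π * (2/5)) = √5 / 4 := by
    rw [show π * (1/5) = π/5 by ring, show π * (2/5) = 2 * (π/5) by ring, sin_two_mul]
    have h5 : √5 ^ 2 = 5 := Real.sq_sqrt (by norm_num)
    have h6 := sin_sq_add_cos_sq (π/5)
    rw [aux_ab] at h6 ⊢
    linear_combination (1+√5)/2 * h6 - (√5+3)/32 * h5
  have hc : Gamma (1/5) * Gamma (2/5) * Gamma (3/5) * Gamma (4/5) = 4 * π^2 / √5 := by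
    rw [show (1:ℝ) - 1/5 = 4/5 by norm_num] at r1
    rw [show (1:ℝ) - 2/5 = 3/5 by norm_num] at r2
    calc _ = (Gamma (1/5) * Gamma (4/5)) * (Gamma (2/5) * Gamma (3/5)) := by ring
      _ = π^2 / (sin (π * (1/5)) * sin (π * (2/5))) := by rw [r1, r2]; field_simp
      _ = _ := by rw [hs]; field_simp
  rw [show (5 * x + 0)/5 = x by ring, show (5 * x + 1)/5 = x + 1/5 by ring,
    show (5 * x + 2)/5 = x + 2/5 by ring, show (5 * x + 3)/5 = x + 3/5 by ring,
    show (5 * x + 4)/5 = x + 4/5 by ring, show ((1:ℝ)+0)/5 = 1/5 by norm_num,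
    show ((1:ℝ)+1)/5 = 2/5 by norm_num, show ((1:ℝ)+2)/5 = 3/5 by norm_num,
    show ((1:ℝ)+3)/5 = 4/5 by norm_num, show ((1:ℝ)+4)/5 = 1 by norm_num, Gamma_one,
    one_mul, one_mul, mul_one, hc] at h
  have p1 := Gamma_pos_of_pos hx
  have p2 := Gamma_pos_of_pos (show 0 < x + 1/5 by positivity)
  have p3 := Gamma_pos_of_pos (show 0 < x + 2/5 by positivity)
  have p5 := Gamma_pos_of_pos (show 0 < x + 3/5 by positivity)
  have p6 := Gamma_pos_of_pos (show 0 < x + 4/5 by positivity)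
  have p4 := Real.pi_pos
  rw [← h, log_div (by positivity) (by positivity), log_mul (by positivity) (by positivity),
    log_mul (by positivity) (by positivity), log_mul (by positivity) (by positivity),
    log_mul (by positivity) (by positivity), log_mul (by positivity) (by positivity),
    log_rpow (by norm_num), log_div (by positivity) (by positivity),
    show 4 * π^2 = (2 * π)^2 by ring, log_pow, log_sqrt (by positivity),
    log_mul p1.ne' p2.ne', log_mul (by norm_num) p4.ne']
  push_cast
  ring

lemma mul2 {x : ℝ} (hx : 0 < x) :
    log (Gamma x) + log (Gamma (x + 1/2)) =
      1/2 * log π + (1 - 2 * x) * log 2 + log (Gamma (2 * x)) := by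
  have h := Gamma_mul_Gamma_add_half x
  have p1 := Gamma_pos_of_pos hx
  have p2 := Gamma_pos_of_pos (show 0 < x + 1/2 by positivity)
  have p3 := Gamma_pos_of_pos (show 0 < 2 * x by positivity)
  have p4 := Real.pi_pos
  rw [← log_mul p1.ne' p2.ne', h, log_mul (by positivity) (by positivity),
    log_mul (by positivity) (by positivity), log_rpow (by norm_num), log_sqrt (by positivity)]
  ring

lemma refl1 {x : ℝ} (hx : 0 < x) (hx1 : x < 1) :
    log (Gamma x) + log (Gamma (1 - x)) = log π - log (sin (π * x)) := by
  have p1 := Gamma_pos_of_pos hx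
  have p2 := Gamma_pos_of_pos (show 0 < 1 - x by linarith)
  have p4 := Real.pi_pos
  have : 0 < sin (π * x) := sin_pos_of_pos_of_lt_pi (by positivity) (by nlinarith)
  rw [← log_mul p1.ne' p2.ne', Gamma_mul_Gamma_one_sub, log_div p4.ne' this.ne']

lemma triple (t : ℝ) : sin t * sin (π/3 - t) * sin (π/3 + t) = sin (3 * t) / 4 := by
  rw [sin_three_mul, sin_sub, sin_add, sin_pi_div_three, cos_pi_div_three]
  have h3 : √3 ^ 2 = 3 := Real.sq_sqrt (by norm_num)
  linear_combination (sin t * cos t ^ 2 / 4) * h3 + 3/4 * sin t * (sin_sq_add_cos_sq t)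

lemma sines :
    sin (π * (11/60)) * sin (π * (1/3)) * sin (π * (28/60)) * sin (π * (8/60)) *
      sin (π * (21/60)) * sin (π * (9/60)) * sin (π * (29/60)) * sin (π * (22/60)) =
    √3 / 64 * cos (π/5) ^ 2 * (cos (π/5) + √3 * sin (π/5)) * (2 * sin (π/5) + 1) := by
  have h1 := triple (π * (9/60))
  rw [show π/3 - π * (9/60) = π * (11/60) by ring, show π/3 + π * (9/60) = π * (29/60) by ring,
    show 3 * (π * (9/60)) = π * (27/60) by ring] at h1
  have h2 := triple (π * (8/60))
  rw [show π/3 - π * (8/60) = π/5 by ring, show π/3 + π * (8/60) = π * (28/60) by ring,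
    show 3 * (π * (8/60)) = 2 * (π/5) by ring, sin_two_mul] at h2
  have hpi := Real.pi_pos
  have hb : 0 < sin (π/5) := sin_pos_of_pos_of_lt_pi (by positivity) (by linarith)
  have h2' : sin (π * (8/60)) * sin (π * (28/60)) = cos (π/5) / 2 := by
    apply mul_left_cancel₀ hb.ne'
    linear_combination h2
  have h3 : sin (π * (1/3)) = √3 / 2 := by
    rw [show π * (1/3) = π/3 by ring, sin_pi_div_three]
  have h4 : sin (π * (22/60)) = cos (π/5) / 2 + √3 / 2 * sin (π/5) := by
    rw [show π * (22/60) = π/2 - (π/3 - π/5) by ring, sin_pi_div_two_sub, cos_sub,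
      sin_pi_div_three, cos_pi_div_three]
    ring
  have h5 : sin (π * (21/60)) * sin (π * (27/60)) =
      (2 * sin (π/5) * cos (π/5) + cos (π/5)) / 2 := by
    have e1 := cos_sub (π * (27/60)) (π * (21/60))
    have e2 := cos_add (π * (27/60)) (π * (21/60))
    rw [show π * (27/60) - π * (21/60) = π/2 - 2 * (π/5) by ring, cos_pi_div_two_sub,
      sin_two_mul] at e1
    rw [show π * (27/60) + π * (21/60) = π - π/5 by ring, cos_pi_sub] at e2
    linear_combination (e2 - e1) / 2
  calc _ = sin (π * (1/3)) * (sin (π * (8/60)) * sin (π * (28/60))) * sin (π * (22/60)) *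
        (sin (π * (21/60)) * (sin (π * (9/60)) * sin (π * (11/60)) * sin (π * (29/60)))) := by ring
    _ = sin (π * (1/3)) * (sin (π * (8/60)) * sin (π * (28/60))) * sin (π * (22/60)) *
        ((sin (π * (21/60)) * sin (π * (27/60))) / 4) := by rw [h1]; ring
    _ = _ := by rw [h2', h3, h4, h5]; ring

lemma alg :
    (5 + √5) * (√15 - √(5 + 2 * √5)) * (√10 - √(5 + √5)) * 2 ^ 8 * √3 *
    (√3 / 64 * cos (π/5) ^ 2 * (cos (π/5) + √3 * sin (π/5)) * (2 * sin (π/5) + 1)) = 2 ^ 2 * 3 * 5 * √2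
    ∧ 0 < √15 - √(5 + 2 * √5) ∧ 0 < √10 - √(5 + √5) := by
  have hpi := Real.pi_pos
  have hb : 0 < sin (π/5) := sin_pos_of_pos_of_lt_pi (by positivity) (by linarith)
  have hab := sin_sq_add_cos_sq (π/5)
  rw [aux_ab] at hab ⊢
  set b := sin (π/5)
  have s3 : √3 ^ 2 = 3 := Real.sq_sqrt (by norm_num)
  have s2 : √2 ^ 2 = 2 := Real.sq_sqrt (by norm_num)
  have s5 : √5 ^ 2 = 5 := Real.sq_sqrt (by norm_num)
  have q2 : 0 < √2 := by positivity
  have q5 : 0 < √5 := by positivity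
  have l1 : 2 * √5 < 10 := by nlinarith
  have e15 : √15 = √3 * √5 := by rw [← Real.sqrt_mul (by norm_num)]; norm_num
  have e10 : √10 = √2 * √5 := by rw [← Real.sqrt_mul (by norm_num)]; norm_num
  have b2 : b ^ 2 = (5 - √5) / 8 := by linear_combination hab - s5 / 16
  have eφ : √(5 + √5) = √2 * (1 + √5) * b := by
    rw [Real.sqrt_eq_iff_mul_self_eq (by positivity) (by positivity)]
    linear_combination -(1 + √5)^2 * b^2 * s2 - 2 * (1 + √5)^2 * b2 - (3 - √5)/4 * s5
  have eψ : √(5 + 2 * √5) = b * (3 + √5) := by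
    rw [Real.sqrt_eq_iff_mul_self_eq (by positivity) (by positivity)]
    linear_combination -(3 + √5)^2 * b2 - (-1 - √5)/8 * s5
  refine ⟨?_, ?_, ?_⟩
  · rw [e15, e10, eφ, eψ]
    have f1 : (√5 - (1 + √5) * b) * (2 * b + 1) = (√5 - 1) * b := by
      linear_combination (-2 * (1 + √5)) * b2 + s5 / 4
    have f2 : (√3 * √5 - b * (3 + √5)) * ((1 + √5)/4 + √3 * b) = b * (2 * √5 - 2) := by
      linear_combination √5 * b * s3 - √3 * (3 + √5) * b2 + (3 * √3 / 8 - b/4) * s5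
    calc _ = √2 * √3^2 / 4 * (5 + √5) * (1 + √5)^2 *
          ((√3 * √5 - b * (3 + √5)) * ((1 + √5)/4 + √3 * b)) *
          ((√5 - (1 + √5) * b) * (2 * b + 1)) := by ring
      _ = √2 * √3^2 / 4 * (5 + √5) * (1 + √5)^2 * (b * (2 * √5 - 2)) * ((√5 - 1) * b) := by
          rw [f1, f2]
      _ = √2 * 3 / 2 * (5 + √5) * (√5^2-1)^2 * b^2 := by rw [s3]; ring
      _ = √2 * 3 / 2 * (25 - √5^2) * (√5^2-1)^2 / 8 := by rw [b2]; ring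
      _ = _ := by rw [s5]; ring
  · rw [sub_pos]; apply Real.sqrt_lt_sqrt (by positivity); linarith
  · rw [sub_pos]; apply Real.sqrt_lt_sqrt (by positivity); linarith

theorem gamma_eleven_sixtieths :
    Real.Gamma (11/60) =
      (Real.sqrt π * Real.sqrt (5 + Real.sqrt 5) *
          Real.sqrt (Real.sqrt 15 - Real.sqrt (5 + 2 * Real.sqrt 5)) *
          Real.sqrt (Real.sqrt 10 - Real.sqrt (5 + Real.sqrt 5)) /
          ((2:ℝ) ^ ((5:ℝ)/4) * Real.sqrt 3 * (5:ℝ) ^ ((17:ℝ)/24))) *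
        (Real.Gamma (1/3))⁻¹ * Real.Gamma (1/60) := by
  obtain ⟨ha, hA, hB⟩ := alg
  rw [← sines] at ha
  have hpi := Real.pi_pos
  have g1 := Gamma_pos_of_pos (show (0:ℝ) < 1/60 by norm_num)
  have g11 := Gamma_pos_of_pos (show (0:ℝ) < 11/60 by norm_num)
  have g20 := Gamma_pos_of_pos (show (0:ℝ) < 1/3 by norm_num)
  have sp : ∀ x : ℝ, 0 < x → x < 1 → 0 < sin (π * x) := fun x h0 h1 =>
    sin_pos_of_pos_of_lt_pi (by positivity) (by nlinarith)
  have t1 := sp (11/60) (by norm_num) (by norm_num)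
  have t2 := sp (1/3) (by norm_num) (by norm_num)
  have t3 := sp (28/60) (by norm_num) (by norm_num)
  have t4 := sp (8/60) (by norm_num) (by norm_num)
  have t5 := sp (21/60) (by norm_num) (by norm_num)
  have t6 := sp (9/60) (by norm_num) (by norm_num)
  have t7 := sp (29/60) (by norm_num) (by norm_num)
  have t8 := sp (22/60) (by norm_num) (by norm_num)
  have hl := congrArg log ha
  generalize hAA : √15 - √(5 + 2 * √5) = A at *
  generalize hBB : √10 - √(5 + √5) = B at *
  have hs5 : 0 < 5 + √5 := by positivity
  generalize 5 + √5 = C at *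
  repeat rw [log_mul (by positivity) (by positivity)] at hl
  rw [log_pow, log_pow, log_sqrt (by norm_num), log_sqrt (by norm_num)] at hl
  apply log_injOn_pos (Set.mem_Ioi.2 g11) (Set.mem_Ioi.2 (by positivity))
  rw [log_mul (by positivity) (by positivity), log_mul (by positivity) (by positivity),
    log_inv, log_div (by positivity) (by positivity), log_mul (by positivity) (by positivity),
    log_mul (by positivity) (by positivity), log_mul (by positivity) (by positivity),
    log_mul (by positivity) (by positivity), log_mul (by positivity) (by positivity),
    log_rpow (by norm_num), log_rpow (by norm_num), log_sqrt (by positivity),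
    log_sqrt (by positivity), log_sqrt (by positivity), log_sqrt (by positivity),
    log_sqrt (by positivity)]
  have a1 := mul5 (x := 4/60) (by norm_num)
  have a2 := mul5 (x := 3/60) (by norm_num)
  have a3 := mul2 (x := 1/60) (by norm_num)
  have a4 := mul2 (x := 2/60) (by norm_num)
  have a5 := mul2 (x := 8/60) (by norm_num)
  have a6 := mul2 (x := 11/60) (by norm_num)
  have a7 := mul3 (x := 1/60) (by norm_num)
  have a8 := mul3 (x := 9/60) (by norm_num)
  have r1 := refl1 (x := 11/60) (by norm_num) (by norm_num)
  have r2 := refl1 (x := 1/3) (by norm_num) (by norm_num)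
  have r3 := refl1 (x := 28/60) (by norm_num) (by norm_num)
  have r4 := refl1 (x := 8/60) (by norm_num) (by norm_num)
  have r5 := refl1 (x := 21/60) (by norm_num) (by norm_num)
  have r6 := refl1 (x := 9/60) (by norm_num) (by norm_num)
  have r7 := refl1 (x := 29/60) (by norm_num) (by norm_num)
  have r8 := refl1 (x := 22/60) (by norm_num) (by norm_num)
  rw [log_mul (by norm_num) hpi.ne'] at a1 a2 a7 a8
  norm_num at a1 a2 a3 a4 a5 a6 a7 a8 r1 r2 r3 r4 r5 r6 r7 r8 hl ⊢
  linarith
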